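/- arXiv:1908.08800 — 2 statements merged into one kernel-verified Lean document; each statement's English description precedes it below -/
import Mathlib

section
/- Suppose the continuation aggregator satisfies the long-run contractivity inequality |H(x,z,a,v) − H(x,z,a,w)| ≤ β(z) ∫ sup_{x'∈X} |v(x',z') − w(x',z')| Q(z,dz') for all feasible (x,z,a) and all v, w ∈ 𝒱 (no condition on r(L_β) is needed), and suppose T_σ maps 𝒱 into itself for a feasible policy σ. Then for all v, w ∈ 𝒱 and all n ≥ 1: sup_{(x,z)∈S} |(T_σ^n v)(x,z) − (T_σ^n w)(x,z)| ≤ m_n · sup_{(x,z)∈S} |v(x,z) − w(x,z)|, where m_n := sup_{z∈Z} E_z[∏_{t=0}^{n-1} β(Z_t)]. -/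
open MeasureTheory ProbabilityTheory Filter Topology

/-- `expProd Q β n z` is the expectation `E_z[∏_{t=0}^{n-1} β(Z_t)]` of the product of
discount factors along the Markov chain generated by the kernel `Q` and started at `z`,
encoded by the canonical iterated-integral recursion (the empty product is `1`). -/
noncomputable def expProd {Z : Type*} [MeasurableSpace Z] (Q : ProbabilityTheory.Kernel Z Z)
    (β : Z → ℝ) : ℕ → Z → ℝ
  | 0 => fun _ => 1
  | n + 1 => fun z => β z * ∫ z', expProd Q β n z' ∂(Q z)

/-- `mSup Q β n = sup_{z ∈ Z} E_z[∏_{t=0}^{n-1} β(Z_t)]`. -/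
noncomputable def mSup {Z : Type*} [MeasurableSpace Z] (Q : ProbabilityTheory.Kernel Z Z)
    (β : Z → ℝ) (n : ℕ) : ℝ :=
  ⨆ z, expProd Q β n z

/-- The policy operator `(T_σ v)(x,z) = H(x,z,σ(x,z),v)`. -/
noncomputable def Tpol {X Z A : Type*} (H : X → Z → A → ((X × Z) → ℝ) → ℝ)
    (σ : X × Z → A) (v : (X × Z) → ℝ) : (X × Z) → ℝ :=
  fun p => H p.1 p.2 (σ p) v

/-!
Write `D` for the supremum of `|v - w|`. Feeding a bound `|T^n v - T^n w| ≤ e_n(z) D`, uniform in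
`x`, into the contractivity inequality gives the bound `e_{n+1}(z) D` with
`e_{n+1}(z) = β(z) ∫ e_n dQ(z, ·)`. This is the recursion defining `E_z[∏_{t<n} β(Z_t)]` by
conditioning on `Z_1`, and `e_0 = 1`.
-/

section ExpProd

variable {Z : Type*} [MeasurableSpace Z] {Q : Kernel Z Z} {β : Z → ℝ}

theorem measurable_expProd (hβ : Measurable β) (n : ℕ) : Measurable (expProd Q β n) := by
  induction n with
  | zero => exact measurable_const
  | succ n ih => exact hβ.mul ih.stronglyMeasurable.integral_kernel.measurable

theorem norm_expProd_le [IsFiniteKernel Q] {C : ℝ} (hβ : ∀ z, ‖β z‖ ≤ C) (n : ℕ) (z : Z) :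
    ‖expProd Q β n z‖ ≤ (C * Q.bound.toReal) ^ n := by
  induction n generalizing z with
  | zero => simp [expProd]
  | succ n ih =>
    have hC : 0 ≤ C := (norm_nonneg _).trans (hβ z)
    have hmass : (Q z).real Set.univ ≤ Q.bound.toReal :=
      ENNReal.toReal_mono (Kernel.bound_ne_top Q) (Kernel.measure_le_bound Q z Set.univ)
    have hintegral : ‖∫ z', expProd Q β n z' ∂(Q z)‖ ≤
        (C * Q.bound.toReal) ^ n * Q.bound.toReal :=
      (norm_integral_le_of_norm_le_const (.of_forall ih)).trans (by gcongr)
    calc ‖expProd Q β (n + 1) z‖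
        = ‖β z‖ * ‖∫ z', expProd Q β n z' ∂(Q z)‖ := norm_mul _ _
      _ ≤ C * ((C * Q.bound.toReal) ^ n * Q.bound.toReal) := by gcongr; exact hβ z
      _ = (C * Q.bound.toReal) ^ (n + 1) := by ring

theorem integrable_expProd [IsFiniteKernel Q] (hβm : Measurable β) {C : ℝ}
    (hβ : ∀ z, ‖β z‖ ≤ C) (n : ℕ) (μ : Measure Z) [IsFiniteMeasure μ] :
    Integrable (expProd Q β n) μ :=
  .of_bound (measurable_expProd hβm n).aestronglyMeasurable _ (.of_forall (norm_expProd_le hβ n))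

theorem expProd_le_mSup [IsFiniteKernel Q] {C : ℝ} (hβ : ∀ z, ‖β z‖ ≤ C) (n : ℕ) (z : Z) :
    expProd Q β n z ≤ mSup Q β n :=
  le_ciSup (f := expProd Q β n)
    ⟨_, Set.forall_mem_range.2 fun y => (Real.le_norm_self _).trans (norm_expProd_le hβ n y)⟩ z

end ExpProd

theorem integral_iSup_le_integral {ι α : Type*} [Nonempty ι] [MeasurableSpace α] {μ : Measure α}
    {f : ι → α → ℝ} {g : α → ℝ} (hf : ∀ i a, 0 ≤ f i a) (hg : Integrable g μ)
    (hfg : ∀ i a, f i a ≤ g a) : ∫ a, ⨆ i, f i a ∂μ ≤ ∫ a, g a ∂μ :=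
  integral_mono_of_nonneg (.of_forall fun a => Real.iSup_nonneg fun i => hf i a) hg
    (.of_forall fun a => ciSup_le fun i => hfg i a)

theorem bddAbove_range_abs_sub {α : Type*} {f g : α → ℝ} (hf : ∃ M, ∀ a, |f a| ≤ M)
    (hg : ∃ M, ∀ a, |g a| ≤ M) : BddAbove (Set.range fun a => |f a - g a|) := by
  obtain ⟨M, hM⟩ := hf
  obtain ⟨N, hN⟩ := hg
  exact ⟨M + N, Set.forall_mem_range.2 fun a =>
    (abs_sub _ _).trans (add_le_add (hM a) (hN a))⟩

/-- Long-run contractivity on `𝒱`, as a property of an operator `T` on functions of `(x, z)`; it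
applies to a policy operator `T_σ` without reference to the aggregator and the policy behind it. -/
def LongRunContractiveOn {X Z : Type*} [MeasurableSpace Z] (Q : Kernel Z Z) (β : Z → ℝ)
    (T : (X × Z → ℝ) → X × Z → ℝ) (𝒱 : Set (X × Z → ℝ)) : Prop :=
  ∀ v ∈ 𝒱, ∀ w ∈ 𝒱, ∀ x z,
    |T v (x, z) - T w (x, z)| ≤ β z * ∫ z', (⨆ x' : X, |v (x', z') - w (x', z')|) ∂(Q z)

theorem LongRunContractiveOn.abs_iterate_sub_le {X Z : Type*} [MeasurableSpace Z]
    {Q : Kernel Z Z} [IsFiniteKernel Q] {β : Z → ℝ} {T : (X × Z → ℝ) → X × Z → ℝ}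
    {𝒱 : Set (X × Z → ℝ)} (hT : LongRunContractiveOn Q β T 𝒱) (hself : Set.MapsTo T 𝒱 𝒱)
    (hβm : Measurable β) (hβ0 : ∀ z, 0 ≤ β z) {C : ℝ} (hβC : ∀ z, ‖β z‖ ≤ C)
    {v w : X × Z → ℝ} (hv : v ∈ 𝒱) (hw : w ∈ 𝒱) {D : ℝ} (hD : ∀ p, |v p - w p| ≤ D)
    (n : ℕ) (x : X) (z : Z) :
    |T^[n] v (x, z) - T^[n] w (x, z)| ≤ expProd Q β n z * D := by
  induction n generalizing x z with
  | zero => simpa [expProd] using hD (x, z)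
  | succ n ih =>
    have : Nonempty X := ⟨x⟩
    calc |T^[n + 1] v (x, z) - T^[n + 1] w (x, z)|
        ≤ β z * ∫ z', (⨆ x' : X, |T^[n] v (x', z') - T^[n] w (x', z')|) ∂(Q z) := by
          simp only [Function.iterate_succ_apply']
          exact hT _ (hself.iterate n hv) _ (hself.iterate n hw) x z
      _ ≤ β z * ∫ z', expProd Q β n z' * D ∂(Q z) :=
          mul_le_mul_of_nonneg_left
            (integral_iSup_le_integral (fun _ _ => abs_nonneg _)
              ((integrable_expProd hβm hβC n (Q z)).mul_const D) ih)
            (hβ0 z)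
      _ = expProd Q β (n + 1) z * D := by rw [integral_mul_const, expProd, mul_assoc]

theorem policy_operator_contraction_estimate_general
    {X Z : Type*} [Nonempty X] [Nonempty Z] [MeasurableSpace Z]
    (Q : Kernel Z Z) [IsFiniteKernel Q]
    (β : Z → ℝ) (hβm : Measurable β) (hβ0 : ∀ z, 0 ≤ β z) (hβb : ∃ C, ∀ z, β z ≤ C)
    (T : (X × Z → ℝ) → X × Z → ℝ) (𝒱 : Set (X × Z → ℝ))
    (hT : LongRunContractiveOn Q β T 𝒱) (hself : Set.MapsTo T 𝒱 𝒱)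
    {v w : X × Z → ℝ} (hv : v ∈ 𝒱) (hw : w ∈ 𝒱)
    (hvw : BddAbove (Set.range fun p => |v p - w p|)) (n : ℕ) :
    (⨆ p, |T^[n] v p - T^[n] w p|) ≤ mSup Q β n * ⨆ p, |v p - w p| := by
  obtain ⟨C, hC⟩ := hβb
  have hβC (z : Z) : ‖β z‖ ≤ C := (Real.norm_of_nonneg (hβ0 z)).trans_le (hC z)
  have hD : 0 ≤ ⨆ p, |v p - w p| := Real.iSup_nonneg fun _ => abs_nonneg _
  refine ciSup_le fun ⟨x, z⟩ => ?_
  calc |T^[n] v (x, z) - T^[n] w (x, z)|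
      ≤ expProd Q β n z * ⨆ p, |v p - w p| :=
        hT.abs_iterate_sub_le hself hβm hβ0 hβC hv hw (le_ciSup hvw) n x z
    _ ≤ mSup Q β n * ⨆ p, |v p - w p| :=
        mul_le_mul_of_nonneg_right (expProd_le_mSup hβC n z) hD

/-- If the continuation aggregator satisfies the long-run contractivity inequality
(with no condition on `r(L_β)`), and `T_σ` maps `𝒱` into itself for a feasible policy `σ`,
then for all `v, w ∈ 𝒱` and `n ≥ 1`,
`sup_S |T_σ^n v − T_σ^n w| ≤ m_n · sup_S |v − w|`, where
`m_n = sup_z E_z[∏_{t=0}^{n-1} β(Z_t)]`. -/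
theorem policy_operator_contraction_estimate
    {X Z A : Type*} [MetricSpace X] [MeasurableSpace X] [BorelSpace X] [Nonempty X]
    [MetricSpace Z] [MeasurableSpace Z] [BorelSpace Z] [Nonempty Z]
    [MetricSpace A] [TopologicalSpace.SeparableSpace A] [MeasurableSpace A] [BorelSpace A]
    (Q : ProbabilityTheory.Kernel Z Z) [IsMarkovKernel Q]
    (Γ : X → Z → Set A) (hΓ : ∀ x z, (Γ x z).Nonempty)
    (H : X → Z → A → ((X × Z) → ℝ) → ℝ)
    -- `𝒱` is a set of bounded Borel measurable real functions on `S = X × Z`.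
    (𝒱 : Set ((X × Z) → ℝ))
    (h𝒱 : ∀ v ∈ 𝒱, Measurable v ∧ ∃ M, ∀ p, |v p| ≤ M)
    (β : Z → ℝ) (hβm : Measurable β) (hβ0 : ∀ z, 0 ≤ β z) (hβb : ∃ C, ∀ z, β z ≤ C)
    -- Long-run contractivity inequality.
    (hH : ∀ v ∈ 𝒱, ∀ w ∈ 𝒱, ∀ x z a, a ∈ Γ x z →
      |H x z a v - H x z a w| ≤
        β z * ∫ z', (⨆ x' : X, |v (x', z') - w (x', z')|) ∂(Q z))
    -- A feasible policy `σ` such that `T_σ` is a self-map on `𝒱`.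
    (σ : X × Z → A) (hσm : Measurable σ) (hσf : ∀ p : X × Z, σ p ∈ Γ p.1 p.2)
    (hself : ∀ v ∈ 𝒱, Tpol H σ v ∈ 𝒱) :
    ∀ v ∈ 𝒱, ∀ w ∈ 𝒱, ∀ n : ℕ, 1 ≤ n →
      (⨆ p : X × Z, |(Tpol H σ)^[n] v p - (Tpol H σ)^[n] w p|) ≤
        mSup Q β n * ⨆ p : X × Z, |v p - w p| :=
  fun v hv w hw n _ =>
    policy_operator_contraction_estimate_general Q β hβm hβ0 hβb (Tpol H σ) 𝒱
      (fun v hv w hw x z => hH v hv w hw x z _ (hσf (x, z))) hself hv hw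
      (bddAbove_range_abs_sub (h𝒱 v hv).2 (h𝒱 w hw).2) n
end

section
/- (Necessity and sufficiency of the spectral radius condition) Suppose Z is a compact metric space, β : Z → (0,∞) is continuous and strictly positive, Q is a Feller Markov kernel on Z, and L_β is a compact operator on the continuous functions on Z. Let {r_t}_{t≥0} be real random variables on the path space of the chain with 0 < a ≤ r_t ≤ b almost surely for constants a ≤ b. Then E_{z_0}[ Σ_{t≥0} (∏_{i=0}^{t-1} β(Z_i)) · r_t ] < ∞ for every initial state z_0 ∈ Z if and only if r(L_β) < 1. -/
open MeasureTheory ProbabilityTheory Filter Topology BoundedContinuousFunction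

/-!
Write `e_n(z) = E_z[∏_{t<n} β(Z_t)]`. Since `0 < a ≤ r_t ≤ b`, the expected discounted sum from `z`
is finite iff `∑ e_n(z)` converges, and `e_n = L^n 1` for the positive operator `L = L_β`.

If `r(L) < 1`, then `‖L^n 1‖` is summable by the root test. Conversely, pointwise convergence of
the series forces `L^n 1 → 0` pointwise. If the norms `‖L^n 1‖` stayed away from zero, the vectors
`L^{n+1} 1 / ‖L^n 1‖` would form a relatively compact sequence tending to zero pointwise, hence in
norm; then the ratios of consecutive norms would tend to zero, so that `‖L^n 1‖ → 0` after all.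
Thus `‖L^N 1‖ < 1` for some `N`, and submultiplicativity of `n ↦ ‖L^n 1‖`, which comes from
positivity, bounds `r(L)` by `‖L^N 1‖ ^ (1/N) < 1`.
-/

theorem summable_of_tendsto_rpow_inv_lt_one {m : ℕ → ℝ} (hm : ∀ n, 0 ≤ m n) {r : ℝ} (hr₁ : r < 1)
    (hr : Tendsto (fun n : ℕ => m n ^ (n : ℝ)⁻¹) atTop (𝓝 r)) : Summable m := by
  have hr₀ : 0 ≤ r := ge_of_tendsto' hr fun n => Real.rpow_nonneg (hm n) _
  obtain ⟨q, hrq, hq₁⟩ := exists_between hr₁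
  refine (summable_geometric_of_lt_one (hr₀.trans hrq.le) hq₁).of_norm_bounded_eventually_nat ?_
  filter_upwards [hr.eventually_lt_const hrq, eventually_ne_atTop 0] with n hn hn₀
  calc ‖m n‖ = (m n ^ (n : ℝ)⁻¹) ^ n := by
        rw [Real.norm_of_nonneg (hm n), Real.rpow_inv_natCast_pow (hm n) hn₀]
    _ ≤ q ^ n := pow_le_pow_left₀ (Real.rpow_nonneg (hm n) _) hn.le n

theorem apply_mul_succ_le_pow_of_submultiplicative {m : ℕ → ℝ}
    (hmul : ∀ n k, m (n + k) ≤ m n * m k) {N : ℕ} (hN : 0 ≤ m N) (k : ℕ) :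
    m (N * (k + 1)) ≤ m N ^ (k + 1) := by
  induction k with
  | zero => simp
  | succ k ih =>
    calc m (N * (k + 1 + 1)) ≤ m (N * (k + 1)) * m N := hmul _ _
      _ ≤ m N ^ (k + 1) * m N := mul_le_mul_of_nonneg_right ih hN
      _ = m N ^ (k + 1 + 1) := (pow_succ _ _).symm

theorem le_rpow_inv_of_tendsto_of_submultiplicative {m : ℕ → ℝ} (hm : ∀ n, 0 ≤ m n)
    (hmul : ∀ n k, m (n + k) ≤ m n * m k) {r : ℝ}
    (hr : Tendsto (fun n : ℕ => m n ^ (n : ℝ)⁻¹) atTop (𝓝 r)) {N : ℕ} (hN : N ≠ 0) :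
    r ≤ m N ^ (N : ℝ)⁻¹ := by
  have hmultiples : Tendsto (fun k => N * (k + 1)) atTop atTop :=
    (tendsto_add_atTop_nat 1).const_mul_atTop' hN.bot_lt
  refine le_of_tendsto' (hr.comp hmultiples) fun k => ?_
  calc m (N * (k + 1)) ^ ((N * (k + 1) : ℕ) : ℝ)⁻¹
      ≤ (m N ^ (k + 1)) ^ ((N * (k + 1) : ℕ) : ℝ)⁻¹ :=
        Real.rpow_le_rpow (hm _) (apply_mul_succ_le_pow_of_submultiplicative hmul (hm N) k)
          (by positivity)
    _ = ((m N ^ (k + 1)) ^ ((k + 1 : ℕ) : ℝ)⁻¹) ^ (N : ℝ)⁻¹ := by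
        rw [← Real.rpow_mul (pow_nonneg (hm N) _), Nat.cast_mul, mul_inv_rev]
    _ = m N ^ (N : ℝ)⁻¹ := by rw [Real.pow_rpow_inv_natCast (hm N) k.succ_ne_zero]

theorem tendsto_of_isCompact_of_tendsto_comp {α X Y : Type*} [TopologicalSpace X]
    [TopologicalSpace Y] [T2Space Y] {f : X → Y} (hf : Continuous f) (hinj : Function.Injective f)
    {K : Set X} (hK : IsCompact K) {l : Filter α} {u : α → X} (hu : ∀ᶠ i in l, u i ∈ K) {x : X}
    (hx : Tendsto (f ∘ u) l (𝓝 (f x))) : Tendsto u l (𝓝 x) := by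
  refine hK.tendsto_nhds_of_unique_mapClusterPt hu fun y _ hy => hinj ?_
  have hfy : MapClusterPt (f y) l (f ∘ u) := hy.continuousAt_comp hf.continuousAt
  exact eq_of_nhds_neBot (ClusterPt.mono hfy hx)

section CompactOperator

variable {ι E : Type*} [NormedAddCommGroup E] [NormedSpace ℝ E] {T : E →ₗ[ℝ] E}

theorem tendsto_apply_zero_of_isCompactOperator (hT : IsCompactOperator T) {ℓ : ι → E →L[ℝ] ℝ}
    (hℓ : Function.Injective fun v i => ℓ i v) {α : Type*} {l : Filter α} {u : α → E} {C : ℝ}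
    (hu : ∀ n, ‖u n‖ ≤ C) (h : ∀ i, Tendsto (fun n => ℓ i (T (u n))) l (𝓝 0)) :
    Tendsto (fun n => T (u n)) l (𝓝 0) := by
  obtain ⟨K, hK, hTK⟩ := hT.image_closedBall_subset_compact (𝕜₁ := ℝ) C
  have hmem : ∀ n, T (u n) ∈ K := fun n =>
    hTK ⟨u n, mem_closedBall_zero_iff.2 (hu n), rfl⟩
  refine tendsto_of_isCompact_of_tendsto_comp (continuous_pi fun i => (ℓ i).continuous) hℓ hK
    (.of_forall hmem) (tendsto_pi_nhds.2 fun i => ?_)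
  simpa using h i

theorem exists_norm_pow_apply_lt_of_isCompactOperator (hT : IsCompactOperator T)
    {ℓ : ι → E →L[ℝ] ℝ} (hℓ : Function.Injective fun v i => ℓ i v) {x : E}
    (h : ∀ i, Tendsto (fun n => ℓ i ((T ^ n) x)) atTop (𝓝 0)) {ε : ℝ} (hε : 0 < ε) :
    ∃ n, ‖(T ^ n) x‖ < ε := by
  by_contra! hge
  have hpos : ∀ n, 0 < ‖(T ^ n) x‖ := fun n => hε.trans_le (hge n)
  have hT_normalize : ∀ n,
      T (‖(T ^ n) x‖⁻¹ • (T ^ n) x) = ‖(T ^ n) x‖⁻¹ • (T ^ (n + 1)) x := fun n => by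
    rw [map_smul, pow_succ', Module.End.mul_apply]
  have hnormalized : Tendsto (fun n => T (‖(T ^ n) x‖⁻¹ • (T ^ n) x)) atTop (𝓝 0) := by
    refine tendsto_apply_zero_of_isCompactOperator hT hℓ (C := 1)
      (fun n => (norm_smul_inv_norm (𝕜 := ℝ) (norm_pos_iff.1 (hpos n))).le) fun i => ?_
    have hbound : Tendsto (fun n => ε⁻¹ * ‖ℓ i ((T ^ (n + 1)) x)‖) atTop (𝓝 0) := by
      simpa using (((tendsto_add_atTop_iff_nat 1).2 (h i)).norm).const_mul ε⁻¹
    refine squeeze_zero_norm (fun n => ?_) hbound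
    rw [hT_normalize, map_smul, norm_smul, norm_inv, norm_norm]
    gcongr
    exact hge n
  have hratio : Tendsto (fun n => ‖(T ^ (n + 1)) x‖ / ‖(T ^ n) x‖) atTop (𝓝 0) := by
    simpa [hT_normalize, norm_smul, inv_mul_eq_div] using hnormalized.norm
  have hsummable : Summable fun n => ‖(T ^ n) x‖ :=
    summable_of_ratio_test_tendsto_lt_one one_pos (.of_forall fun n => (hpos n).ne')
      (by simpa using hratio)
  exact (ge_of_tendsto' hsummable.tendsto_atTop_zero hge).not_gt hε

end CompactOperator

section PositiveOperator

variable {X : Type*} [TopologicalSpace X] {T : (X →ᵇ ℝ) →ₗ[ℝ] (X →ᵇ ℝ)}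

theorem pow_apply_one_nonneg (hT : Monotone T) (n : ℕ) : 0 ≤ (T ^ n) 1 := by
  have hTn : Monotone (T ^ n) := Module.End.coe_pow T n ▸ hT.iterate n
  have hone : (0 : X →ᵇ ℝ) ≤ 1 := fun _ => zero_le_one
  simpa only [map_zero] using hTn hone

theorem norm_pow_add_apply_one_le (hT : Monotone T) (n k : ℕ) :
    ‖(T ^ (n + k)) 1‖ ≤ ‖(T ^ n) 1‖ * ‖(T ^ k) 1‖ := by
  have hTn : Monotone (T ^ n) := Module.End.coe_pow T n ▸ hT.iterate n
  have hle_norm : (T ^ k) 1 ≤ ‖(T ^ k) 1‖ • (1 : X →ᵇ ℝ) := fun x => by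
    simpa using (le_abs_self _).trans (((T ^ k) 1).norm_coe_le_norm x)
  have hle : (T ^ (n + k)) 1 ≤ ‖(T ^ k) 1‖ • (T ^ n) 1 := by
    rw [pow_add, Module.End.mul_apply, ← map_smul]
    exact hTn hle_norm
  calc ‖(T ^ (n + k)) 1‖ ≤ ‖‖(T ^ k) 1‖ • (T ^ n) 1‖ :=
        norm_le_norm_of_abs_le_abs <| abs_le_abs_of_nonneg (pow_apply_one_nonneg hT _) hle
    _ = ‖(T ^ n) 1‖ * ‖(T ^ k) 1‖ := by rw [norm_smul, norm_norm, mul_comm]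

theorem summable_pow_apply_one_iff_lt_one [Nonempty X] (hT : Monotone T)
    (hTc : IsCompactOperator T) {r : ℝ}
    (hr : Tendsto (fun n : ℕ => ‖(T ^ n) 1‖ ^ (n : ℝ)⁻¹) atTop (𝓝 r)) :
    (∀ x, Summable fun n => (T ^ n) 1 x) ↔ r < 1 := by
  refine ⟨fun hsum => ?_, fun hr₁ x => ?_⟩
  · obtain ⟨N, hN⟩ : ∃ N, ‖(T ^ N) 1‖ < 1 :=
      exists_norm_pow_apply_lt_of_isCompactOperator hTc
        (ℓ := BoundedContinuousFunction.evalCLM ℝ) DFunLike.coe_injective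
        (fun x => (hsum x).tendsto_atTop_zero) one_pos
    have hN₀ : N ≠ 0 := by
      rintro rfl
      simp at hN
    calc r ≤ ‖(T ^ N) 1‖ ^ (N : ℝ)⁻¹ :=
          le_rpow_inv_of_tendsto_of_submultiplicative (fun _ => norm_nonneg _)
            (norm_pow_add_apply_one_le hT) hr hN₀
      _ < 1 := Real.rpow_lt_one (norm_nonneg _) hN (by positivity)
  · exact (summable_of_tendsto_rpow_inv_lt_one (fun _ => norm_nonneg _) hr₁ hr).of_norm_bounded
      fun n => ((T ^ n) 1).norm_coe_le_norm x

end PositiveOperator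

/-- The raw map `L` is the operator `L_β`, `(L_β h)(z) = β(z) ∫ h dQ(z, ·)`, acting on bounded
continuous functions. That `L` takes values in continuous functions is part of its type. -/
def IsDiscountOperator {Z : Type*} [TopologicalSpace Z] [MeasurableSpace Z] (Q : Kernel Z Z)
    (β : Z → ℝ) (L : (Z →ᵇ ℝ) → (Z →ᵇ ℝ)) : Prop :=
  ∀ (h : Z →ᵇ ℝ) (z : Z), L h z = β z * ∫ z', h z' ∂(Q z)

namespace IsDiscountOperator

variable {Z : Type*} [TopologicalSpace Z] [MeasurableSpace Z] [OpensMeasurableSpace Z]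
  {Q : Kernel Z Z} [IsFiniteKernel Q] {β : Z → ℝ} {L : (Z →ᵇ ℝ) → (Z →ᵇ ℝ)}

/-- The operator `L_β` as a linear map, so that its powers and their norms make sense. -/
def toLinearMap (hL : IsDiscountOperator Q β L) : (Z →ᵇ ℝ) →ₗ[ℝ] (Z →ᵇ ℝ) where
  toFun := L
  map_add' f g := by
    ext z
    simp only [BoundedContinuousFunction.add_apply, hL _ z,
      integral_add (f.integrable (Q z)) (g.integrable (Q z)), mul_add]
  map_smul' c f := by
    ext z
    simp only [BoundedContinuousFunction.smul_apply, hL _ z, smul_eq_mul, integral_const_mul,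
      RingHom.id_apply, mul_left_comm]

theorem toLinearMap_monotone (hL : IsDiscountOperator Q β L) (hβ : ∀ z, 0 ≤ β z) :
    Monotone hL.toLinearMap := fun f g hfg z => by
  change L f z ≤ L g z
  rw [hL, hL]
  exact mul_le_mul_of_nonneg_left
    (integral_mono (f.integrable (Q z)) (g.integrable (Q z)) hfg) (hβ z)

theorem toLinearMap_pow_one_apply (hL : IsDiscountOperator Q β L) (n : ℕ) (z : Z) :
    (hL.toLinearMap ^ n) 1 z = expProd Q β n z := by
  induction n generalizing z with
  | zero => rfl
  | succ n ih =>
    rw [pow_succ', Module.End.mul_apply]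
    simp only [expProd, ← ih]
    exact hL _ z

theorem norm_toLinearMap_pow_one (hL : IsDiscountOperator Q β L) (hβ : ∀ z, 0 ≤ β z) (n : ℕ) :
    ‖(hL.toLinearMap ^ n) 1‖ = mSup Q β n := by
  rw [BoundedContinuousFunction.norm_eq_iSup_norm, mSup]
  refine iSup_congr fun z => ?_
  have hnonneg : 0 ≤ (hL.toLinearMap ^ n) 1 z :=
    pow_apply_one_nonneg (hL.toLinearMap_monotone hβ) n z
  rw [Real.norm_of_nonneg hnonneg, hL.toLinearMap_pow_one_apply]

end IsDiscountOperator

theorem tsum_ofReal_lt_top_iff_summable {α : Type*} {f : α → ℝ} (hf : ∀ i, 0 ≤ f i) :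
    ∑' i, ENNReal.ofReal (f i) < ⊤ ↔ Summable f := by
  refine ⟨fun h => ?_, Summable.tsum_ofReal_lt_top⟩
  simpa only [ENNReal.toReal_ofReal (hf _)] using ENNReal.summable_toReal h.ne

theorem lintegral_tsum_mul_lt_top_iff {Ω ι : Type*} [Countable ι] [MeasurableSpace Ω]
    {μ : Measure Ω} {w ρ : ι → Ω → ENNReal} (hw : ∀ i, AEMeasurable (w i) μ) {a b : ENNReal}
    (ha : a ≠ 0) (hb : b ≠ ⊤) (hρ : ∀ i, ∀ᵐ ω ∂μ, a ≤ ρ i ω ∧ ρ i ω ≤ b) :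
    ∫⁻ ω, ∑' i, w i ω * ρ i ω ∂μ < ⊤ ↔ ∑' i, ∫⁻ ω, w i ω ∂μ < ⊤ := by
  rw [← lintegral_tsum hw]
  refine ⟨fun h => ?_, fun h => ?_⟩
  · have hlower : (∫⁻ ω, ∑' i, w i ω ∂μ) * a ≤ ∫⁻ ω, ∑' i, w i ω * ρ i ω ∂μ := by
      refine (lintegral_mul_const_le _ _).trans (lintegral_mono_ae ?_)
      filter_upwards [ae_all_iff.2 hρ] with ω hω
      rw [← ENNReal.tsum_mul_right]
      exact ENNReal.tsum_le_tsum fun i => mul_le_mul_right (hω i).1 _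
    exact ENNReal.lt_top_of_mul_ne_top_left (hlower.trans_lt h).ne ha
  · have hupper : ∫⁻ ω, ∑' i, w i ω * ρ i ω ∂μ ≤ (∫⁻ ω, ∑' i, w i ω ∂μ) * b := by
      rw [← lintegral_mul_const' _ _ hb]
      refine lintegral_mono_ae ?_
      filter_upwards [ae_all_iff.2 hρ] with ω hω
      rw [← ENNReal.tsum_mul_right]
      exact ENNReal.tsum_le_tsum fun i => mul_le_mul_right (hω i).2 _
    exact hupper.trans_lt (ENNReal.mul_lt_top h hb.lt_top)

theorem spectral_radius_necessary_sufficient_general {Z : Type*} [TopologicalSpace Z] [Nonempty Z]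
    [MeasurableSpace Z] [OpensMeasurableSpace Z] {Q : Kernel Z Z} [IsFiniteKernel Q]
    {β : Z → ℝ} (hβm : Measurable β) (hβ : ∀ z, 0 ≤ β z)
    {L : (Z →ᵇ ℝ) → (Z →ᵇ ℝ)} (hL : IsDiscountOperator Q β L) (hLc : IsCompactOperator L)
    {P : Z → Measure (ℕ → Z)}
    (hP : ∀ z (n : ℕ), ∫⁻ ω, ∏ i ∈ Finset.range n, ENNReal.ofReal (β (ω i)) ∂(P z) =
      ENNReal.ofReal (expProd Q β n z))
    {ρ : ℕ → (ℕ → Z) → ℝ} {a b : ℝ} (ha : 0 < a)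
    (hρ : ∀ z t, ∀ᵐ ω ∂(P z), a ≤ ρ t ω ∧ ρ t ω ≤ b)
    {r : ℝ} (hr : Tendsto (fun n : ℕ => mSup Q β n ^ (n : ℝ)⁻¹) atTop (𝓝 r)) :
    (∀ z, ∫⁻ ω, ∑' t : ℕ, (∏ i ∈ Finset.range t, ENNReal.ofReal (β (ω i))) *
      ENNReal.ofReal (ρ t ω) ∂(P z) < ⊤) ↔ r < 1 := by
  have hT : Monotone hL.toLinearMap := hL.toLinearMap_monotone hβ
  have hmeas : ∀ t, Measurable fun ω : ℕ → Z =>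
      ∏ i ∈ Finset.range t, ENNReal.ofReal (β (ω i)) := fun t => by fun_prop
  simp only [← hL.norm_toLinearMap_pow_one hβ] at hr
  rw [← summable_pow_apply_one_iff_lt_one hT hLc hr]
  refine forall_congr' fun z => ?_
  rw [lintegral_tsum_mul_lt_top_iff (fun t => (hmeas t).aemeasurable) (ENNReal.ofReal_pos.2 ha).ne'
    ENNReal.ofReal_ne_top (fun t => (hρ z t).mono fun ω hω =>
      ⟨ENNReal.ofReal_le_ofReal hω.1, ENNReal.ofReal_le_ofReal hω.2⟩)]
  simp only [hP, ← hL.toLinearMap_pow_one_apply]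
  exact tsum_ofReal_lt_top_iff_summable fun n => pow_apply_one_nonneg hT n z

/-- **Necessity and sufficiency of the spectral radius condition.**
Suppose `Z` is a compact metric space, `β` is continuous and strictly positive, `Q` is a
Feller Markov kernel, and `L_β` is a compact operator on continuous functions.  If
`{r_t}` are random variables on the path space of the chain with `0 < a ≤ r_t ≤ b` a.s.,
then `E_{z₀}[Σ_{t≥0} (∏_{i<t} β(Z_i)) r_t] < ∞` for every initial state `z₀` if and only
if `r(L_β) < 1`. -/
theorem spectral_radius_necessary_sufficient
    {Z : Type*} [MetricSpace Z] [CompactSpace Z] [Nonempty Z]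
    [MeasurableSpace Z] [BorelSpace Z]
    (Q : ProbabilityTheory.Kernel Z Z) [IsMarkovKernel Q]
    (β : Z → ℝ) (hβc : Continuous β) (hβpos : ∀ z, 0 < β z)
    -- `Q` is Feller.
    (hFeller : ∀ v : Z →ᵇ ℝ, Continuous fun z => ∫ z', v z' ∂(Q z))
    -- `L_β` is a compact operator on the (bounded) continuous functions on `Z`.
    (L : (Z →ᵇ ℝ) → (Z →ᵇ ℝ)) (hL : ∀ h : Z →ᵇ ℝ, ∀ z, L h z = β z * ∫ z', h z' ∂(Q z))
    (hLcp : IsCompactOperator L)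
    -- `P z` is the law of the chain `{Z_t}` started at `z` on path space `ℕ → Z`.
    (P : Z → MeasureTheory.Measure (ℕ → Z)) (hP : ∀ z, IsProbabilityMeasure (P z))
    (hPlaw : ∀ z (n : ℕ),
      ∫⁻ ω, ∏ i ∈ Finset.range n, ENNReal.ofReal (β (ω i)) ∂(P z) =
        ENNReal.ofReal (expProd Q β n z))
    -- the reward process `{r_t}` with `0 < a ≤ r_t ≤ b` almost surely.
    (rv : ℕ → (ℕ → Z) → ℝ) (hrvm : ∀ t, Measurable (rv t))
    (a b : ℝ) (ha : 0 < a) (hab : a ≤ b)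
    (hrv : ∀ z, ∀ t, ∀ᵐ ω ∂(P z), a ≤ rv t ω ∧ rv t ω ≤ b)
    -- `r(L_β)` is the limit defining the spectral radius.
    (r : ℝ) (hr : Tendsto (fun n : ℕ => mSup Q β n ^ ((n : ℝ)⁻¹)) atTop (𝓝 r)) :
    (∀ z₀ : Z,
      ∫⁻ ω, ∑' t : ℕ,
        (∏ i ∈ Finset.range t, ENNReal.ofReal (β (ω i))) * ENNReal.ofReal (rv t ω)
        ∂(P z₀) < ⊤) ↔ r < 1 :=
  spectral_radius_necessary_sufficient_general hβc.measurable (fun z => (hβpos z).le) hL hLcp hPlaw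
    ha hrv hr
end
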